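/- Let Ω be an open subset of ℝⁿ, let f = (u₁, v₁) and g = (u₂, v₂) be H-continuous pairs on Ω, and let D_fg = { x ∈ Ω : u₁(x) = v₁(x) and u₂(x) = v₂(x) }. Then D_fg is dense in Ω, and the pair (I(D_fg,Ω,(u₁+u₂)|_{D_fg}), S(D_fg,Ω,(v₁+v₂)|_{D_fg})) is H-continuous and satisfies u₁(x) + u₂(x) ≤ I(D_fg,Ω,(u₁+u₂)|_{D_fg})(x) ≤ S(D_fg,Ω,(v₁+v₂)|_{D_fg})(x) ≤ v₁(x) + v₂(x) for all x ∈ Ω; consequently it equals f ⊕ g, the unique H-continuous pair contained pointwise in the interval sum f + g. -/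

import Mathlib

open Set

/-- Points of `ℝⁿ`. -/
abbrev Pt (n : ℕ) := EuclideanSpace ℝ (Fin n)

/-- Lower Baire operator `I(D,Ω,f)(x) = sup_{δ>0} inf { f y : y ∈ B_δ(x) ∩ D }`,
where `B_δ(x) = { y ∈ Ω : ‖y - x‖ < δ }`. -/
noncomputable def Ilow {n : ℕ} (D Om : Set (Pt n)) (f : Pt n → ℝ) (x : Pt n) : ℝ :=
  sSup {a : ℝ | ∃ δ : ℝ, 0 < δ ∧
    a = sInf (f '' {y | y ∈ Om ∧ ‖y - x‖ < δ ∧ y ∈ D})}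

/-- Upper Baire operator `S(D,Ω,f)(x) = inf_{δ>0} sup { f y : y ∈ B_δ(x) ∩ D }`. -/
noncomputable def Shigh {n : ℕ} (D Om : Set (Pt n)) (f : Pt n → ℝ) (x : Pt n) : ℝ :=
  sInf {a : ℝ | ∃ δ : ℝ, 0 < δ ∧
    a = sSup (f '' {y | y ∈ Om ∧ ‖y - x‖ < δ ∧ y ∈ D})}

/-- `f`, defined on `D ⊆ Ω`, is locally bounded relative to `Ω`. -/
def LocBddOn {n : ℕ} (Om D : Set (Pt n)) (f : Pt n → ℝ) : Prop :=
  ∀ x ∈ Om, ∃ δ : ℝ, 0 < δ ∧ ∃ M : ℝ,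
    ∀ y, y ∈ Om → ‖y - x‖ < δ → y ∈ D → |f y| < M

/-- `(u, v)` encodes an interval-valued function `x ↦ [u x, v x]` on `Om`. -/
def IntervalPair {n : ℕ} (Om : Set (Pt n)) (u v : Pt n → ℝ) : Prop :=
  LocBddOn Om Om u ∧ LocBddOn Om Om v ∧ ∀ x ∈ Om, u x ≤ v x

/-- The pair `(u, v)` is S-continuous on `Om`: `I(u) = u` and `S(v) = v`. -/
def SCont {n : ℕ} (Om : Set (Pt n)) (u v : Pt n → ℝ) : Prop :=
  ∀ x ∈ Om, Ilow Om Om u x = u x ∧ Shigh Om Om v x = v x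

/-- The pair `(u, v)` is Hausdorff continuous on `Om`. -/
def HCont {n : ℕ} (Om : Set (Pt n)) (u v : Pt n → ℝ) : Prop :=
  ∀ p q : Pt n → ℝ, LocBddOn Om Om p → LocBddOn Om Om q →
    (∀ x ∈ Om, u x ≤ p x ∧ p x ≤ q x ∧ q x ≤ v x) →
    ∀ x ∈ Om, Ilow Om Om p x = u x ∧ Shigh Om Om q x = v x

/-- `(u, v)` is an H-continuous interval pair on `Om`. -/
def HContPair {n : ℕ} (Om : Set (Pt n)) (u v : Pt n → ℝ) : Prop :=
  IntervalPair Om u v ∧ HCont Om u v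

/-- Lower endpoint of the pointwise interval product. -/
noncomputable def imin {n : ℕ} (u₁ v₁ u₂ v₂ : Pt n → ℝ) (x : Pt n) : ℝ :=
  min (min (u₁ x * u₂ x) (u₁ x * v₂ x)) (min (v₁ x * u₂ x) (v₁ x * v₂ x))

/-- Upper endpoint of the pointwise interval product. -/
noncomputable def imax {n : ℕ} (u₁ v₁ u₂ v₂ : Pt n → ℝ) (x : Pt n) : ℝ :=
  max (max (u₁ x * u₂ x) (u₁ x * v₂ x)) (max (v₁ x * u₂ x) (v₁ x * v₂ x))

/-- `(pl, pu)` is the H-continuous pair contained pointwise in the interval sum of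
`(u₁, v₁)` and `(u₂, v₂)`, i.e. `(pl, pu) = (u₁,v₁) ⊕ (u₂,v₂)`. -/
def IsOplus {n : ℕ} (Om : Set (Pt n)) (u₁ v₁ u₂ v₂ pl pu : Pt n → ℝ) : Prop :=
  HContPair Om pl pu ∧
    ∀ x ∈ Om, u₁ x + u₂ x ≤ pl x ∧ pl x ≤ pu x ∧ pu x ≤ v₁ x + v₂ x

/-- `(ql, qu)` is the H-continuous pair contained pointwise in the interval product of
`(u₁, v₁)` and `(u₂, v₂)`, i.e. `(ql, qu) = (u₁,v₁) ⊗ (u₂,v₂)`. -/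
def IsOtimes {n : ℕ} (Om : Set (Pt n)) (u₁ v₁ u₂ v₂ ql qu : Pt n → ℝ) : Prop :=
  HContPair Om ql qu ∧
    ∀ x ∈ Om, imin u₁ v₁ u₂ v₂ x ≤ ql x ∧ ql x ≤ qu x ∧ qu x ≤ imax u₁ v₁ u₂ v₂ x

/-
`I(D, Ω, f)` is the largest lower semicontinuous function on `Ω` lying below `f` on `D`, and
`S(D, Ω, f)` the smallest upper semicontinuous one lying above it. If `D` is dense in `Ω` and `f` is
continuous on `D`, these two functions agree with `f` on `D`, so that any `p` between them has
`I(p) = I(D, Ω, f)` and `S(p) = S(D, Ω, f)`: they form an H-continuous pair.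

For an H-continuous pair `(u, v)` the difference `v - u` is upper semicontinuous and, as `S(u) = v`,
smaller than any `ε > 0` on a dense set; by Baire's theorem `u = v` on a residual set. Two residual
sets have a dense intersection `D`, on which `u₁ + u₂ = v₁ + v₂` is both lower and upper
semicontinuous, hence continuous.
-/

open Filter Topology Metric Bornology

section Semicontinuity

variable {X : Type*} [TopologicalSpace X] {u v : X → ℝ}

lemma continuousOn_of_lowerSemicontinuousOn_of_upperSemicontinuousOn_of_eqOn {s : Set X}
    (hu : LowerSemicontinuousOn u s) (hv : UpperSemicontinuousOn v s) (huv : EqOn u v s) :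
    ContinuousOn u s := by
  refine continuousOn_iff_lower_upperSemicontinuousOn.2 ⟨hu, fun x hx c hc => ?_⟩
  filter_upwards [hv x hx c ((huv hx).symm.trans_lt hc), self_mem_nhdsWithin] with y hy hys
  exact (huv hys).trans_lt hy

lemma dense_setOf_sub_lt_of_frequently_lt (hv : UpperSemicontinuous v)
    (huv : ∀ x, ∀ c < v x, ∃ᶠ y in 𝓝 x, c < u y) {ε : ℝ} (hε : 0 < ε) :
    Dense {x | v x - u x < ε} := by
  intro x
  rw [mem_closure_iff_frequently]
  have hu : ∃ᶠ y in 𝓝 x, v x - ε / 2 < u y := huv x _ (by linarith)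
  have hv : ∀ᶠ y in 𝓝 x, v y < v x + ε / 2 := hv x _ (by linarith)
  refine (hu.and_eventually hv).mono fun y hy => ?_
  rw [mem_ofPred_eq]
  linarith [hy.1, hy.2]

lemma eventually_residual_eq_of_frequently_lt (hu : LowerSemicontinuous u)
    (hv : UpperSemicontinuous v) (hle : ∀ x, u x ≤ v x)
    (huv : ∀ x, ∀ c < v x, ∃ᶠ y in 𝓝 x, c < u y) :
    ∀ᶠ x in residual X, u x = v x := by
  have hopen (ε : ℝ) : IsOpen {x | v x - u x < ε} := by
    simpa only [sub_eq_add_neg] using! (hv.add hu.neg).isOpen_preimage ε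
  have hlt (k : ℕ) : ∀ᶠ x in residual X, v x - u x < 1 / ((k : ℝ) + 1) :=
    residual_of_dense_open (hopen _)
      (dense_setOf_sub_lt_of_frequently_lt hv huv Nat.one_div_pos_of_nat)
  filter_upwards [eventually_countable_forall.2 hlt] with x hx
  refine (hle x).antisymm (sub_nonpos.1 (le_of_forall_pos_lt_add fun ε hε => ?_))
  obtain ⟨k, hk⟩ := exists_nat_one_div_lt hε
  linarith [hx k]

end Semicontinuity

section BoundedOnBounded

variable {X : Type*} [Bornology X] {s t : Set X} {f g h : X → ℝ}

/-- `f` is bounded on every bounded subset of `s`. Local boundedness is not enough to compute with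
`Ilow` and `Shigh`, because these range over balls of all radii and a ball on which `f` is unbounded
contributes the junk value `0`. -/
def BoundedOnBounded (s : Set X) (f : X → ℝ) : Prop :=
  ∀ t ⊆ s, IsBounded t → IsBounded (f '' t)

namespace BoundedOnBounded

lemma mono (hf : BoundedOnBounded s f) (hts : t ⊆ s) : BoundedOnBounded t f :=
  fun r hr => hf r (hr.trans hts)

lemma bddBelow_image (hf : BoundedOnBounded s f) (hts : t ⊆ s) (ht : IsBounded t) :
    BddBelow (f '' t) :=
  (hf t hts ht).bddBelow

lemma bddAbove_image (hf : BoundedOnBounded s f) (hts : t ⊆ s) (ht : IsBounded t) :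
    BddAbove (f '' t) :=
  (hf t hts ht).bddAbove

lemma of_le_of_le (hf : ∀ t ⊆ s, IsBounded t → BddBelow (f '' t))
    (hg : ∀ t ⊆ s, IsBounded t → BddAbove (g '' t))
    (hfh : ∀ x ∈ s, f x ≤ h x) (hhg : ∀ x ∈ s, h x ≤ g x) : BoundedOnBounded s h := by
  intro t hts ht
  obtain ⟨m, hm⟩ := hf t hts ht
  obtain ⟨M, hM⟩ := hg t hts ht
  refine isBounded_iff_bddBelow_bddAbove.2 ⟨⟨m, ?_⟩, ⟨M, ?_⟩⟩
  · exact forall_mem_image.2 fun x hx => (hm (mem_image_of_mem f hx)).trans (hfh x (hts hx))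
  · exact forall_mem_image.2 fun x hx => (hhg x (hts hx)).trans (hM (mem_image_of_mem g hx))

lemma neg (hf : BoundedOnBounded s f) : BoundedOnBounded s (-f) := by
  intro t hts ht
  rw [show (-f) '' t = -(f '' t) by rw [← image_neg_eq_neg, image_image]; rfl]
  exact (hf t hts ht).neg

lemma add (hf : BoundedOnBounded s f) (hg : BoundedOnBounded s g) :
    BoundedOnBounded s (f + g) := by
  intro t hts ht
  refine ((hf t hts ht).add (hg t hts ht)).subset (image_subset_iff.2 fun x hx => ?_)
  exact add_mem_add (mem_image_of_mem f hx) (mem_image_of_mem g hx)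

end BoundedOnBounded

end BoundedOnBounded

lemma BoundedOnBounded.locBddOn {n : ℕ} {s : Set (Pt n)} {f : Pt n → ℝ}
    (hf : BoundedOnBounded s f) : LocBddOn s s f := by
  intro x _
  obtain ⟨M, hM⟩ := (hf (s ∩ ball x 1) inter_subset_left
    (isBounded_ball.subset inter_subset_right)).exists_norm_le
  refine ⟨1, one_pos, M + 1, fun y hy hyx _ => ?_⟩
  have hfy : ‖f y‖ ≤ M := hM _ (mem_image_of_mem f ⟨hy, mem_ball_iff_norm.2 hyx⟩)
  exact (Real.norm_eq_abs (f y)).symm.trans_lt (by linarith)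

section BaireOperators

variable {n : ℕ} {D Om t : Set (Pt n)} {f g p : Pt n → ℝ} {x : Pt n} {c : ℝ}

lemma Ilow_eq_iSup (hDOm : D ⊆ Om) :
    Ilow D Om f x = ⨆ δ : Ioi (0 : ℝ), sInf (f '' (D ∩ ball x δ)) := by
  have hball (δ : ℝ) : {y | y ∈ Om ∧ ‖y - x‖ < δ ∧ y ∈ D} = D ∩ ball x δ := by
    ext y
    rw [mem_inter_iff, mem_ball_iff_norm]
    exact ⟨fun ⟨_, hyx, hy⟩ => ⟨hy, hyx⟩, fun ⟨hy, hyx⟩ => ⟨hDOm hy, hyx, hy⟩⟩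
  simp only [Ilow, hball, iSup, range, Subtype.exists, mem_Ioi, exists_prop, eq_comm]

lemma Shigh_eq_neg_Ilow_neg : Shigh D Om f x = -Ilow D Om (-f) x := by
  have hsInf (s : Set (Pt n)) : sInf ((-f) '' s) = -sSup (f '' s) := by
    rw [Real.sInf_def, ← image_neg_eq_neg, image_image]
    simp only [Pi.neg_apply, neg_neg]
  simp only [Shigh, Ilow, hsInf]
  rw [Real.sInf_def]
  congr 2
  ext a
  simp only [Set.mem_neg, mem_ofPred_eq, neg_eq_iff_eq_neg]

lemma Shigh_congr (hfg : EqOn f g D) : Shigh D Om f x = Shigh D Om g x := by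
  unfold Shigh
  congr! 8
  exact image_congr fun y hy => hfg hy.2.2

lemma bddAbove_range_sInf_image_ball {M : ℝ} (hM : ∃ᶠ y in 𝓝[D] x, f y ≤ M) :
    BddAbove (range fun δ : Ioi (0 : ℝ) => sInf (f '' (D ∩ ball x δ))) := by
  refine ⟨max 0 M, forall_mem_range.2 fun ⟨δ, hδ⟩ => ?_⟩
  obtain ⟨y, hyM, hy⟩ :=
    (hM.and_eventually (inter_mem_nhdsWithin D (ball_mem_nhds x hδ))).exists
  by_cases hbdd : BddBelow (f '' (D ∩ ball x δ))
  · exact (csInf_le hbdd (mem_image_of_mem f hy)).trans (hyM.trans (le_max_right _ _))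
  · exact (Real.sInf_of_not_bddBelow hbdd).trans_le (le_max_left _ _)

lemma eventually_lt_of_lt_Ilow (hDOm : D ⊆ Om) (hf : BoundedOnBounded D f)
    (hc : c < Ilow D Om f x) : ∀ᶠ y in 𝓝[D] x, c < f y := by
  rw [Ilow_eq_iSup hDOm] at hc
  have : Nonempty (Ioi (0 : ℝ)) := nonempty_Ioi.to_subtype
  obtain ⟨⟨δ, hδ⟩, hcδ⟩ := exists_lt_of_lt_ciSup hc
  filter_upwards [inter_mem_nhdsWithin D (ball_mem_nhds x hδ)] with y hy
  exact hcδ.trans_le (csInf_le (hf.bddBelow_image inter_subset_left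
    (isBounded_ball.subset inter_subset_right)) (mem_image_of_mem f hy))

lemma le_Ilow_of_eventually_le (hDOm : D ⊆ Om) (hf : BoundedOnBounded D f) (hx : x ∈ closure D)
    (hc : ∀ᶠ y in 𝓝[D] x, c ≤ f y) : c ≤ Ilow D Om f x := by
  have : (𝓝[D] x).NeBot := mem_closure_iff_nhdsWithin_neBot.1 hx
  obtain ⟨M, hM⟩ := hf.bddAbove_image inter_subset_left
    ((isBounded_ball (x := x) (r := 1)).subset inter_subset_right)
  have hfM : ∀ᶠ y in 𝓝[D] x, f y ≤ M := by
    filter_upwards [inter_mem_nhdsWithin D (ball_mem_nhds x one_pos)] with y hy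
    exact hM (mem_image_of_mem f hy)
  obtain ⟨δ, hδ, hcδ⟩ := mem_nhdsWithin_iff.1 hc
  rw [Ilow_eq_iSup hDOm]
  refine le_ciSup_of_le (bddAbove_range_sInf_image_ball hfM.frequently) ⟨δ, hδ⟩ (le_csInf ?_ ?_)
  · rw [image_nonempty, inter_comm]
    exact mem_closure_iff_nhds.1 hx _ (ball_mem_nhds x hδ)
  · exact forall_mem_image.2 fun y hy => hcδ ⟨hy.2, hy.1⟩

lemma eventually_lt_of_Shigh_lt (hDOm : D ⊆ Om) (hf : BoundedOnBounded D f)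
    (hc : Shigh D Om f x < c) : ∀ᶠ y in 𝓝[D] x, f y < c := by
  rw [Shigh_eq_neg_Ilow_neg, neg_lt] at hc
  exact (eventually_lt_of_lt_Ilow hDOm hf.neg hc).mono fun y hy => neg_lt_neg_iff.1 hy

lemma Shigh_le_of_eventually_le (hDOm : D ⊆ Om) (hf : BoundedOnBounded D f) (hx : x ∈ closure D)
    (hc : ∀ᶠ y in 𝓝[D] x, f y ≤ c) : Shigh D Om f x ≤ c := by
  rw [Shigh_eq_neg_Ilow_neg, neg_le]
  exact le_Ilow_of_eventually_le hDOm hf.neg hx (hc.mono fun y hy => neg_le_neg hy)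

lemma Ilow_le (hDOm : D ⊆ Om) (hf : BoundedOnBounded D f) (hx : x ∈ D) : Ilow D Om f x ≤ f x :=
  le_of_forall_lt fun _ hc => (eventually_lt_of_lt_Ilow hDOm hf hc).self_of_nhdsWithin hx

lemma le_Ilow_of_lowerSemicontinuousWithinAt (hDOm : D ⊆ Om) (hf : BoundedOnBounded D f)
    (hx : x ∈ closure D) (hg : LowerSemicontinuousWithinAt g D x) (hgf : ∀ y ∈ D, g y ≤ f y) :
    g x ≤ Ilow D Om f x := by
  refine le_of_forall_lt_imp_le_of_dense fun c hc => le_Ilow_of_eventually_le hDOm hf hx ?_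
  filter_upwards [hg c hc, self_mem_nhdsWithin] with y hcy hy
  exact hcy.le.trans (hgf y hy)

lemma Shigh_le_of_upperSemicontinuousWithinAt (hDOm : D ⊆ Om) (hf : BoundedOnBounded D f)
    (hx : x ∈ closure D) (hg : UpperSemicontinuousWithinAt g D x) (hfg : ∀ y ∈ D, f y ≤ g y) :
    Shigh D Om f x ≤ g x := by
  rw [Shigh_eq_neg_Ilow_neg, neg_le]
  exact le_Ilow_of_lowerSemicontinuousWithinAt hDOm hf.neg hx hg.neg
    fun y hy => neg_le_neg (hfg y hy)

lemma le_Ilow_of_lowerSemicontinuousOn (hDOm : D ⊆ Om) (hOm : Om ⊆ closure D)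
    (hf : BoundedOnBounded D f) (hg : LowerSemicontinuousOn g Om) (hgf : ∀ y ∈ D, g y ≤ f y)
    (hx : x ∈ Om) : g x ≤ Ilow D Om f x :=
  le_Ilow_of_lowerSemicontinuousWithinAt hDOm hf (hOm hx) ((hg x hx).mono hDOm) hgf

lemma Shigh_le_of_upperSemicontinuousOn (hDOm : D ⊆ Om) (hOm : Om ⊆ closure D)
    (hf : BoundedOnBounded D f) (hg : UpperSemicontinuousOn g Om) (hfg : ∀ y ∈ D, f y ≤ g y)
    (hx : x ∈ Om) : Shigh D Om f x ≤ g x :=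
  Shigh_le_of_upperSemicontinuousWithinAt hDOm hf (hOm hx) ((hg x hx).mono hDOm) hfg

lemma lowerSemicontinuousOn_Ilow (hDOm : D ⊆ Om) (hOm : Om ⊆ closure D)
    (hf : BoundedOnBounded D f) : LowerSemicontinuousOn (Ilow D Om f) Om := by
  intro x _ c hc
  obtain ⟨b, hcb, hb⟩ := exists_between hc
  have hlt : ∀ᶠ y in 𝓝 x, ∀ᶠ z in 𝓝[D] y, b < f z :=
    eventually_nhds_nhdsWithin.2 (eventually_lt_of_lt_Ilow hDOm hf hb)
  filter_upwards [hlt.filter_mono nhdsWithin_le_nhds, self_mem_nhdsWithin] with y hy hyOm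
  exact hcb.trans_le (le_Ilow_of_eventually_le hDOm hf (hOm hyOm) (hy.mono fun _ => le_of_lt))

lemma Ilow_le_Shigh (hDOm : D ⊆ Om) (hf : BoundedOnBounded D f) (hx : x ∈ closure D) :
    Ilow D Om f x ≤ Shigh D Om f x := by
  have : (𝓝[D] x).NeBot := mem_closure_iff_nhdsWithin_neBot.1 hx
  by_contra! hlt
  obtain ⟨c, hSc, hcI⟩ := exists_between hlt
  obtain ⟨y, hcy, hyc⟩ := ((eventually_lt_of_lt_Ilow hDOm hf hcI).and
    (eventually_lt_of_Shigh_lt hDOm hf hSc)).exists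
  exact hcy.asymm hyc

lemma bddBelow_image_Ilow (hDOm : D ⊆ Om) (hf : BoundedOnBounded D f) (htD : t ⊆ closure D)
    (ht : IsBounded t) : BddBelow (Ilow D Om f '' t) := by
  obtain ⟨r, htr⟩ := (isBounded_iff_subset_ball 0).1 ht
  obtain ⟨m, hm⟩ := hf.bddBelow_image inter_subset_left
    ((isBounded_ball (x := (0 : Pt n)) (r := r)).subset inter_subset_right)
  refine ⟨m, forall_mem_image.2 fun x hx => le_Ilow_of_eventually_le hDOm hf (htD hx) ?_⟩
  filter_upwards [inter_mem_nhdsWithin D (isOpen_ball.mem_nhds (htr hx))] with y hy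
  exact hm (mem_image_of_mem f hy)

lemma boundedOnBounded_of_Ilow_le_of_le_Shigh (hDOm : D ⊆ Om) (hOm : Om ⊆ closure D)
    (hf : BoundedOnBounded D f) (hIp : ∀ x ∈ Om, Ilow D Om f x ≤ p x)
    (hpS : ∀ x ∈ Om, p x ≤ Shigh D Om f x) : BoundedOnBounded Om p := by
  refine .of_le_of_le (fun t htOm ht => bddBelow_image_Ilow hDOm hf (htOm.trans hOm) ht)
    (fun t htOm ht => ?_) hIp hpS
  obtain ⟨m, hm⟩ := bddBelow_image_Ilow hDOm hf.neg (htOm.trans hOm) ht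
  refine ⟨-m, forall_mem_image.2 fun x hx => ?_⟩
  rw [Shigh_eq_neg_Ilow_neg, neg_le_neg_iff]
  exact hm (mem_image_of_mem _ hx)

lemma Ilow_self_eq_Ilow_of_le (hDOm : D ⊆ Om) (hOm : Om ⊆ closure D) (hf : BoundedOnBounded D f)
    (hp : BoundedOnBounded Om p) (hIp : ∀ y ∈ Om, Ilow D Om f y ≤ p y) (hpf : ∀ y ∈ D, p y ≤ f y)
    (hx : x ∈ Om) : Ilow Om Om p x = Ilow D Om f x := by
  apply le_antisymm
  · exact le_Ilow_of_lowerSemicontinuousOn hDOm hOm hf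
      (lowerSemicontinuousOn_Ilow Subset.rfl subset_closure hp)
      (fun y hy => (Ilow_le Subset.rfl hp (hDOm hy)).trans (hpf y hy)) hx
  · exact le_Ilow_of_lowerSemicontinuousOn Subset.rfl subset_closure hp
      (lowerSemicontinuousOn_Ilow hDOm hOm hf) hIp hx

lemma Shigh_self_eq_Shigh_of_le (hDOm : D ⊆ Om) (hOm : Om ⊆ closure D)
    (hf : BoundedOnBounded D f) (hp : BoundedOnBounded Om p)
    (hpS : ∀ y ∈ Om, p y ≤ Shigh D Om f y) (hfp : ∀ y ∈ D, f y ≤ p y) (hx : x ∈ Om) :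
    Shigh Om Om p x = Shigh D Om f x := by
  simp only [Shigh_eq_neg_Ilow_neg, le_neg (a := p _)] at hpS ⊢
  rw [Ilow_self_eq_Ilow_of_le hDOm hOm hf.neg hp.neg hpS (fun y hy => neg_le_neg (hfp y hy)) hx]

lemma hContPair_Ilow_Shigh (hDOm : D ⊆ Om) (hOm : Om ⊆ closure D) (hf : BoundedOnBounded D f)
    (hcont : ContinuousOn f D) : HContPair Om (Ilow D Om f) (Shigh D Om f) := by
  have hIS (x) (hx : x ∈ Om) : Ilow D Om f x ≤ Shigh D Om f x := Ilow_le_Shigh hDOm hf (hOm hx)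
  have hbdd {p : Pt n → ℝ} := boundedOnBounded_of_Ilow_le_of_le_Shigh (p := p) hDOm hOm hf
  have hfI (x) (hx : x ∈ D) : f x ≤ Ilow D Om f x :=
    le_Ilow_of_lowerSemicontinuousWithinAt hDOm hf (subset_closure hx)
      (hcont.lowerSemicontinuousOn x hx) fun _ _ => le_rfl
  have hSf (x) (hx : x ∈ D) : Shigh D Om f x ≤ f x :=
    Shigh_le_of_upperSemicontinuousWithinAt hDOm hf (subset_closure hx)
      (hcont.upperSemicontinuousOn x hx) fun _ _ => le_rfl
  refine ⟨⟨(hbdd (fun _ _ => le_rfl) hIS).locBddOn, (hbdd hIS fun _ _ => le_rfl).locBddOn, hIS⟩,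
    fun p q _ _ hpq x hx => ⟨?_, ?_⟩⟩
  · have hpS (y) (hy : y ∈ Om) : p y ≤ Shigh D Om f y := (hpq y hy).2.1.trans (hpq y hy).2.2
    have hIp (y) (hy : y ∈ Om) : Ilow D Om f y ≤ p y := (hpq y hy).1
    exact Ilow_self_eq_Ilow_of_le hDOm hOm hf (hbdd hIp hpS) hIp
      (fun y hy => (hpS y (hDOm hy)).trans (hSf y hy)) hx
  · have hIq (y) (hy : y ∈ Om) : Ilow D Om f y ≤ q y := (hpq y hy).1.trans (hpq y hy).2.1
    have hqS (y) (hy : y ∈ Om) : q y ≤ Shigh D Om f y := (hpq y hy).2.2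
    exact Shigh_self_eq_Shigh_of_le hDOm hOm hf (hbdd hIq hqS) hqS
      (fun y hy => (hfI y hy).trans (hIq y (hDOm hy))) hx

lemma bddBelow_image_of_Ilow_eq_self (hf : ∀ x ∈ Om, Ilow Om Om f x = f x) (htOm : t ⊆ Om)
    (ht : IsBounded t) : BddBelow (f '' t) := by
  by_contra hunbdd
  obtain ⟨_, ⟨y, hyt, rfl⟩, hfy⟩ := not_bddBelow_iff.1 hunbdd 0
  obtain ⟨r, hr, htr⟩ := ht.subset_ball_lt 0 y
  have hzero : sInf (f '' (Om ∩ ball y r)) = 0 :=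
    Real.sInf_of_not_bddBelow fun h => hunbdd (h.mono (image_mono (subset_inter htOm htr)))
  have hfreq : ∃ᶠ z in 𝓝[Om] y, f z ≤ f y :=
    fun h => h.self_of_nhdsWithin (htOm hyt) le_rfl
  -- An infimum over an unbounded set is `0` by convention, which would force `0 ≤ I(f)(y) = f y`.
  have hnonneg : 0 ≤ Ilow Om Om f y := by
    rw [Ilow_eq_iSup Subset.rfl]
    exact le_ciSup_of_le (bddAbove_range_sInf_image_ball hfreq) ⟨r, hr⟩ hzero.ge
  exact hfy.not_ge (hnonneg.trans_eq (hf y (htOm hyt)))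

end BaireOperators

namespace HContPair

variable {n : ℕ} {D Om : Set (Pt n)} {f u v p : Pt n → ℝ}

lemma le {x : Pt n} (h : HContPair Om u v) (hx : x ∈ Om) : u x ≤ v x :=
  h.1.2.2 x hx

lemma Ilow_left {x : Pt n} (h : HContPair Om u v) (hx : x ∈ Om) : Ilow Om Om u x = u x :=
  (h.2 u v h.1.1 h.1.2.1 (fun _ hy => ⟨le_rfl, h.le hy, le_rfl⟩) x hx).1

lemma Shigh_right {x : Pt n} (h : HContPair Om u v) (hx : x ∈ Om) : Shigh Om Om v x = v x :=
  (h.2 u v h.1.1 h.1.2.1 (fun _ hy => ⟨le_rfl, h.le hy, le_rfl⟩) x hx).2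

lemma Shigh_left {x : Pt n} (h : HContPair Om u v) (hx : x ∈ Om) : Shigh Om Om u x = v x :=
  (h.2 u u h.1.1 h.1.1 (fun _ hy => ⟨le_rfl, le_rfl, h.le hy⟩) x hx).2

lemma boundedOnBounded_of_le_of_le (h : HContPair Om u v) (hup : ∀ x ∈ Om, u x ≤ p x)
    (hpv : ∀ x ∈ Om, p x ≤ v x) : BoundedOnBounded Om p := by
  refine .of_le_of_le (fun t => bddBelow_image_of_Ilow_eq_self fun x hx => h.Ilow_left hx)
    (fun t htOm ht => ?_) hup hpv
  have hneg (x) (hx : x ∈ Om) : Ilow Om Om (-v) x = (-v) x := by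
    rw [Pi.neg_apply, ← h.Shigh_right hx, Shigh_eq_neg_Ilow_neg, neg_neg]
  obtain ⟨m, hm⟩ := bddBelow_image_of_Ilow_eq_self hneg htOm ht
  exact ⟨-m, forall_mem_image.2 fun x hx => le_neg.1 (hm (mem_image_of_mem _ hx))⟩

lemma boundedOnBounded_left (h : HContPair Om u v) : BoundedOnBounded Om u :=
  h.boundedOnBounded_of_le_of_le (fun _ _ => le_rfl) fun _ => h.le

lemma boundedOnBounded_right (h : HContPair Om u v) : BoundedOnBounded Om v :=
  h.boundedOnBounded_of_le_of_le (fun _ => h.le) fun _ _ => le_rfl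

lemma lowerSemicontinuousOn (h : HContPair Om u v) : LowerSemicontinuousOn u Om :=
  fun _ hx _ hc => eventually_lt_of_lt_Ilow Subset.rfl h.boundedOnBounded_left
    (hc.trans_eq (h.Ilow_left hx).symm)

lemma upperSemicontinuousOn (h : HContPair Om u v) : UpperSemicontinuousOn v Om :=
  fun _ hx _ hc => eventually_lt_of_Shigh_lt Subset.rfl h.boundedOnBounded_right
    ((h.Shigh_right hx).trans_lt hc)

lemma frequently_lt_left {x : Pt n} {c : ℝ} (h : HContPair Om u v) (hx : x ∈ Om) (hc : c < v x) :
    ∃ᶠ y in 𝓝[Om] x, c < u y := by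
  by_contra hle
  simp only [not_frequently, not_lt] at hle
  refine hc.not_ge ((h.Shigh_left hx).symm.trans_le ?_)
  exact Shigh_le_of_eventually_le Subset.rfl h.boundedOnBounded_left (subset_closure hx) hle

lemma eventually_residual_eq (h : HContPair Om u v) : ∀ᶠ x : Om in residual Om, u x = v x :=
  eventually_residual_eq_of_frequently_lt
    (fun x c hc => (eventually_nhds_subtype_iff Om x _).2 (h.lowerSemicontinuousOn x x.2 c hc))
    (fun x c hc => (eventually_nhds_subtype_iff Om x _).2 (h.upperSemicontinuousOn x x.2 c hc))
    (fun x => h.le x.2)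
    (fun x _ hc => (frequently_nhds_subtype_iff Om x _).2 (h.frequently_lt_left x.2 hc))

lemma subset_closure_setOf_eq_and_eq [BaireSpace Om] {u₁ v₁ u₂ v₂ : Pt n → ℝ}
    (h₁ : HContPair Om u₁ v₁) (h₂ : HContPair Om u₂ v₂) :
    Om ⊆ closure {x | x ∈ Om ∧ u₁ x = v₁ x ∧ u₂ x = v₂ x} := by
  have hdense := dense_of_mem_residual (h₁.eventually_residual_eq.and h₂.eventually_residual_eq)
  refine (Subtype.dense_iff.1 hdense).trans (closure_mono ?_)
  exact image_subset_iff.2 fun x hx => ⟨x.2, hx⟩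

lemma continuousOn_add {u₁ v₁ u₂ v₂ : Pt n → ℝ} (h₁ : HContPair Om u₁ v₁)
    (h₂ : HContPair Om u₂ v₂) (hDOm : D ⊆ Om) (heq : EqOn (u₁ + u₂) (v₁ + v₂) D) :
    ContinuousOn (u₁ + u₂) D :=
  continuousOn_of_lowerSemicontinuousOn_of_upperSemicontinuousOn_of_eqOn
    ((h₁.lowerSemicontinuousOn.add h₂.lowerSemicontinuousOn).mono hDOm)
    ((h₁.upperSemicontinuousOn.add h₂.upperSemicontinuousOn).mono hDOm) heq

lemma eq_Ilow_and_eq_Shigh {x : Pt n} (h : HContPair Om u v) (hDOm : D ⊆ Om)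
    (hOm : Om ⊆ closure D) (hf : BoundedOnBounded D f) (hcont : ContinuousOn f D)
    (huf : ∀ y ∈ D, u y ≤ f y) (hfv : ∀ y ∈ D, f y ≤ v y) (hx : x ∈ Om) :
    u x = Ilow D Om f x ∧ v x = Shigh D Om f x := by
  have hpair : HContPair Om (Ilow D Om f) (Shigh D Om f) :=
    hContPair_Ilow_Shigh hDOm hOm hf hcont
  have huI (y) (hy : y ∈ Om) : u y ≤ Ilow D Om f y :=
    le_Ilow_of_lowerSemicontinuousOn hDOm hOm hf h.lowerSemicontinuousOn huf hy
  have hSv (y) (hy : y ∈ Om) : Shigh D Om f y ≤ v y :=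
    Shigh_le_of_upperSemicontinuousOn hDOm hOm hf h.upperSemicontinuousOn hfv hy
  obtain ⟨hI, hS⟩ := h.2 _ _ hpair.1.1 hpair.1.2.1
    (fun y hy => ⟨huI y hy, hpair.le hy, hSv y hy⟩) x hx
  exact ⟨hI.symm.trans (hpair.Ilow_left hx), hS.symm.trans (hpair.Shigh_right hx)⟩

end HContPair

theorem stmt16_general {n : ℕ} (Om : Set (Pt n)) [BaireSpace Om]
    (u₁ v₁ u₂ v₂ : Pt n → ℝ)
    (h₁ : HContPair Om u₁ v₁) (h₂ : HContPair Om u₂ v₂)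
    (D : Set (Pt n)) (hDdef : D = {x | x ∈ Om ∧ u₁ x = v₁ x ∧ u₂ x = v₂ x}) :
    Om ⊆ closure D ∧
    HContPair Om (Ilow D Om (fun x => u₁ x + u₂ x))
      (Shigh D Om (fun x => v₁ x + v₂ x)) ∧
    (∀ x ∈ Om, u₁ x + u₂ x ≤ Ilow D Om (fun y => u₁ y + u₂ y) x ∧
      Ilow D Om (fun y => u₁ y + u₂ y) x ≤ Shigh D Om (fun y => v₁ y + v₂ y) x ∧
      Shigh D Om (fun y => v₁ y + v₂ y) x ≤ v₁ x + v₂ x) ∧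
    ∀ pl pu : Pt n → ℝ, IsOplus Om u₁ v₁ u₂ v₂ pl pu →
      ∀ x ∈ Om, pl x = Ilow D Om (fun y => u₁ y + u₂ y) x ∧
        pu x = Shigh D Om (fun y => v₁ y + v₂ y) x := by
  have hdense : Om ⊆ closure D := hDdef ▸ h₁.subset_closure_setOf_eq_and_eq h₂
  have hDOm : D ⊆ Om := hDdef ▸ fun x hx => hx.1
  have heq : EqOn (u₁ + u₂) (v₁ + v₂) D := hDdef ▸ fun x hx => congrArg₂ (· + ·) hx.2.1 hx.2.2
  have hbdd : BoundedOnBounded D (u₁ + u₂) :=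
    (h₁.boundedOnBounded_left.add h₂.boundedOnBounded_left).mono hDOm
  have hcont : ContinuousOn (u₁ + u₂) D := h₁.continuousOn_add h₂ hDOm heq
  have hpair := hContPair_Ilow_Shigh hDOm hdense hbdd hcont
  have hS : Shigh D Om (fun x => v₁ x + v₂ x) = Shigh D Om (u₁ + u₂) :=
    funext fun x => Shigh_congr heq.symm
  rw [hS]
  refine ⟨hdense, hpair, fun x hx => ⟨?_, hpair.le hx, ?_⟩, fun pl pu ⟨hP, hsub⟩ x hx => ?_⟩
  · exact le_Ilow_of_lowerSemicontinuousOn hDOm hdense hbdd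
      (h₁.lowerSemicontinuousOn.add h₂.lowerSemicontinuousOn) (fun _ _ => le_rfl) hx
  · exact Shigh_le_of_upperSemicontinuousOn hDOm hdense hbdd
      (h₁.upperSemicontinuousOn.add h₂.upperSemicontinuousOn) (fun y hy => (heq hy).le) hx
  · refine hP.eq_Ilow_and_eq_Shigh hDOm hdense hbdd hcont (fun y hy => ?_) (fun y hy => ?_) hx
    · obtain ⟨_, hlu, huv⟩ := hsub y (hDOm hy)
      exact (hlu.trans huv).trans_eq (heq hy).symm
    · obtain ⟨hul, hlu, _⟩ := hsub y (hDOm hy)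
      exact hul.trans hlu

theorem stmt16 {n : ℕ} (Om : Set (Pt n)) (hOm : IsOpen Om)
    (u₁ v₁ u₂ v₂ : Pt n → ℝ)
    (h₁ : HContPair Om u₁ v₁) (h₂ : HContPair Om u₂ v₂)
    (D : Set (Pt n)) (hDdef : D = {x | x ∈ Om ∧ u₁ x = v₁ x ∧ u₂ x = v₂ x}) :
    Om ⊆ closure D ∧
    HContPair Om (Ilow D Om (fun x => u₁ x + u₂ x))
      (Shigh D Om (fun x => v₁ x + v₂ x)) ∧
    (∀ x ∈ Om, u₁ x + u₂ x ≤ Ilow D Om (fun y => u₁ y + u₂ y) x ∧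
      Ilow D Om (fun y => u₁ y + u₂ y) x ≤ Shigh D Om (fun y => v₁ y + v₂ y) x ∧
      Shigh D Om (fun y => v₁ y + v₂ y) x ≤ v₁ x + v₂ x) ∧
    ∀ pl pu : Pt n → ℝ, IsOplus Om u₁ v₁ u₂ v₂ pl pu →
      ∀ x ∈ Om, pl x = Ilow D Om (fun y => u₁ y + u₂ y) x ∧
        pu x = Shigh D Om (fun y => v₁ y + v₂ y) x :=
  have := hOm.baireSpace
  stmt16_general Om u₁ v₁ u₂ v₂ h₁ h₂ D hDdef
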